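/- (Monotone form of l'Hôpital's rule.) Let u, v : [a, b] → ℝ be continuous on [a, b] and differentiable on (a, b), with v'(x) ≠ 0 for all x in (a, b). If u'/v' is strictly increasing on (a, b), then the function x ↦ (u(x) − u(a))/(v(x) − v(a)) is strictly increasing on (a, b). -/

import Mathlib

/-!
Cauchy's mean value theorem writes `(u y - u x) / (v y - v x)` as `u' c / v' c` with `x < c < y`, so
the increment ratio over an interval is smaller than that over the adjacent interval on its right.
By Darboux, `v'` has constant sign, so the increments of `v` over the two intervals have the same
sign; the ratio over their union is then a mediant and lies strictly between the two ratios.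
-/

open Set

section Mediant

variable {K : Type*} [Field K] [LinearOrder K] [IsStrictOrderedRing K] {p q r s : K}

lemma div_lt_div_iff_of_mul_pos (hqs : 0 < q * s) : p / q < r / s ↔ p * s < r * q := by
  have hq : q ≠ 0 := left_ne_zero_of_mul hqs.ne'
  have hs : s ≠ 0 := right_ne_zero_of_mul hqs.ne'
  rw [← mul_div_mul_right p q hs, ← mul_div_mul_left r s hq, div_lt_div_iff_of_pos_right hqs,
    mul_comm q r]

lemma div_lt_add_div_add_of_mul_pos (hqs : 0 < q * s) (h : p / q < r / s) :
    p / q < (p + r) / (q + s) := by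
  have hsum : 0 < q * (q + s) := by
    rw [mul_add]
    exact add_pos (mul_self_pos.2 (left_ne_zero_of_mul hqs.ne')) hqs
  rw [div_lt_div_iff_of_mul_pos hqs] at h
  rw [div_lt_div_iff_of_mul_pos hsum]
  linarith

lemma add_div_add_lt_div_of_mul_pos (hqs : 0 < q * s) (h : p / q < r / s) :
    (p + r) / (q + s) < r / s := by
  have hsum : 0 < (q + s) * s := by
    rw [add_mul]
    exact add_pos hqs (mul_self_pos.2 (right_ne_zero_of_mul hqs.ne'))
  rw [div_lt_div_iff_of_mul_pos hqs] at h
  rw [div_lt_div_iff_of_mul_pos hsum]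
  linarith

end Mediant

section Derivative

variable {u v u' v' : ℝ → ℝ} {s : Set ℝ} {x y z : ℝ}

lemma strictMonoOn_or_strictAntiOn_of_hasDerivAt_ne_zero (hs : Convex ℝ s)
    (hv : ContinuousOn v s) (hv' : ∀ x ∈ interior s, HasDerivAt v (v' x) x)
    (hv'ne : ∀ x ∈ interior s, v' x ≠ 0) : StrictMonoOn v s ∨ StrictAntiOn v s := by
  have hderiv (x : ℝ) (hx : x ∈ interior s) : HasDerivWithinAt v (v' x) (interior s) x :=
    (hv' x hx).hasDerivWithinAt
  rcases hasDerivWithinAt_forall_lt_or_forall_gt_of_forall_ne hs.interior hderiv hv'ne with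
    hneg | hpos
  · exact .inr (strictAntiOn_of_hasDerivWithinAt_neg hs hv hderiv hneg)
  · exact .inl (strictMonoOn_of_hasDerivWithinAt_pos hs hv hderiv hpos)

lemma mul_sub_pos_of_strictMonoOn_or_strictAntiOn (h : StrictMonoOn v s ∨ StrictAntiOn v s)
    (hx : x ∈ s) (hy : y ∈ s) (hz : z ∈ s) (hxy : x < y) (hyz : y < z) :
    0 < (v y - v x) * (v z - v y) := by
  rcases h with hmono | hanti
  · exact mul_pos (sub_pos.2 (hmono hx hy hxy)) (sub_pos.2 (hmono hy hz hyz))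
  · exact mul_pos_of_neg_of_neg (sub_neg.2 (hanti hx hy hxy)) (sub_neg.2 (hanti hy hz hyz))

lemma exists_hasDerivAt_div_eq_sub_div_sub (hxy : x < y)
    (hu : ContinuousOn u (Icc x y)) (hv : ContinuousOn v (Icc x y))
    (hu' : ∀ t ∈ Ioo x y, HasDerivAt u (u' t) t) (hv' : ∀ t ∈ Ioo x y, HasDerivAt v (v' t) t)
    (hv'ne : ∀ t ∈ Ioo x y, v' t ≠ 0) :
    ∃ c ∈ Ioo x y, u' c / v' c = (u y - u x) / (v y - v x) := by
  obtain ⟨c, hc, hcauchy⟩ := exists_ratio_hasDerivAt_eq_ratio_slope u u' hxy hu hu' v v' hv hv'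
  have hvxy : v y - v x ≠ 0 := fun h ↦
    have ⟨d, hd, hd0⟩ := exists_hasDerivAt_eq_zero hxy hv (sub_eq_zero.1 h).symm hv'
    hv'ne d hd hd0
  exact ⟨c, hc, (div_eq_div_iff (hv'ne c hc) hvxy).2 (by rw [mul_comm, hcauchy])⟩

lemma sub_div_sub_lt_sub_div_sub_of_strictMonoOn_div (hs : Convex ℝ s)
    (hu : ContinuousOn u s) (hv : ContinuousOn v s)
    (hu' : ∀ t ∈ interior s, HasDerivAt u (u' t) t)
    (hv' : ∀ t ∈ interior s, HasDerivAt v (v' t) t) (hv'ne : ∀ t ∈ interior s, v' t ≠ 0)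
    (hmono : StrictMonoOn (fun t ↦ u' t / v' t) (interior s))
    (hx : x ∈ s) (hy : y ∈ s) (hz : z ∈ s) (hxy : x < y) (hyz : y < z) :
    (u y - u x) / (v y - v x) < (u z - u y) / (v z - v y) := by
  have hcauchy {p q : ℝ} (hp : p ∈ s) (hq : q ∈ s) (hpq : p < q) :
      ∃ c ∈ Ioo p q, c ∈ interior s ∧ u' c / v' c = (u q - u p) / (v q - v p) := by
    have hIcc : Icc p q ⊆ s := hs.ordConnected.out hp hq
    have hIoo : Ioo p q ⊆ interior s := interior_maximal (Ioo_subset_Icc_self.trans hIcc) isOpen_Ioo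
    obtain ⟨c, hc, hratio⟩ := exists_hasDerivAt_div_eq_sub_div_sub hpq (hu.mono hIcc)
      (hv.mono hIcc) (fun t ht ↦ hu' t (hIoo ht)) (fun t ht ↦ hv' t (hIoo ht))
      (fun t ht ↦ hv'ne t (hIoo ht))
    exact ⟨c, hc, hIoo hc, hratio⟩
  obtain ⟨c, hc, hcs, hcxy⟩ := hcauchy hx hy hxy
  obtain ⟨d, hd, hds, hdyz⟩ := hcauchy hy hz hyz
  rw [← hcxy, ← hdyz]
  exact hmono hcs hds (hc.2.trans hd.1)

theorem monotone_lhopital_general (hs : Convex ℝ s) {a : ℝ} (ha : a ∈ s)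
    (hu : ContinuousOn u s) (hv : ContinuousOn v s)
    (hu' : ∀ x ∈ interior s, HasDerivAt u (u' x) x)
    (hv' : ∀ x ∈ interior s, HasDerivAt v (v' x) x) (hv'ne : ∀ x ∈ interior s, v' x ≠ 0)
    (hmono : StrictMonoOn (fun x ↦ u' x / v' x) (interior s)) :
    StrictMonoOn (fun x ↦ (u x - u a) / (v x - v a)) (s \ {a}) := by
  rintro x ⟨hx, hxa⟩ y ⟨hy, hya⟩ hxy
  have hadjacent {p q r : ℝ} (hp : p ∈ s) (hq : q ∈ s) (hr : r ∈ s) (hpq : p < q) (hqr : q < r) :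
      (u q - u p) / (v q - v p) < (u r - u q) / (v r - v q) :=
    sub_div_sub_lt_sub_div_sub_of_strictMonoOn_div hs hu hv hu' hv' hv'ne hmono hp hq hr hpq hqr
  have hsign {p q r : ℝ} (hp : p ∈ s) (hq : q ∈ s) (hr : r ∈ s) (hpq : p < q) (hqr : q < r) :
      0 < (v q - v p) * (v r - v q) :=
    mul_sub_pos_of_strictMonoOn_or_strictAntiOn
      (strictMonoOn_or_strictAntiOn_of_hasDerivAt_ne_zero hs hv hv' hv'ne) hp hq hr hpq hqr
  have hswap (t : ℝ) : (u t - u a) / (v t - v a) = (u a - u t) / (v a - v t) := by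
    rw [← neg_div_neg_eq, neg_sub, neg_sub]
  beta_reduce
  rcases lt_or_gt_of_ne hxa with hxa | hax
  · rw [hswap x]
    rcases lt_or_gt_of_ne hya with hya | hay
    · rw [hswap y]
      simpa only [sub_add_sub_cancel'] using
        add_div_add_lt_div_of_mul_pos (hsign hx hy ha hxy hya) (hadjacent hx hy ha hxy hya)
    · exact hadjacent hx ha hy hxa hay
  · simpa only [sub_add_sub_cancel'] using
      div_lt_add_div_add_of_mul_pos (hsign ha hx hy hax hxy) (hadjacent ha hx hy hax hxy)

end Derivative

/-- Monotone form of l'Hôpital's rule. -/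
theorem monotone_lhopital (a b : ℝ) (hab : a < b) (u v u' v' : ℝ → ℝ)
    (hu : ContinuousOn u (Set.Icc a b)) (hv : ContinuousOn v (Set.Icc a b))
    (hu' : ∀ x ∈ Set.Ioo a b, HasDerivAt u (u' x) x)
    (hv' : ∀ x ∈ Set.Ioo a b, HasDerivAt v (v' x) x)
    (hv'ne : ∀ x ∈ Set.Ioo a b, v' x ≠ 0)
    (hmono : StrictMonoOn (fun x => u' x / v' x) (Set.Ioo a b)) :
    StrictMonoOn (fun x => (u x - u a) / (v x - v a)) (Set.Ioo a b) := by
  rw [← interior_Icc] at hu' hv' hv'ne hmono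
  exact (monotone_lhopital_general (convex_Icc a b) (Set.left_mem_Icc.2 hab.le)
    hu hv hu' hv' hv'ne hmono).mono fun x hx ↦ ⟨Set.Ioo_subset_Icc_self hx, hx.1.ne'⟩
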